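/- arXiv:math/0703205 — 9 statements merged into one kernel-verified Lean document; each statement's English description precedes it below -/
import Mathlib

section
/- Let n ≥ 1 be a natural number and let p, q ∈ ℤ/nℤ be such that p² + q² is a unit in ℤ/nℤ. Let S_P ⊆ (ℤ/nℤ)² be the set of column vectors {(p,q), (−q,p), (−p,−q), (q,−p)}. Then a matrix A ∈ SL₂(ℤ/nℤ) maps the set S_P onto itself (under matrix–vector multiplication) if and only if A is one of the four matrices I, −I, S, −S, where S = [[0,−1],[1,0]] and I is the identity matrix. -/
/-!
Write `v = (p, q)` and `Sv = (-q, p)`, so that `S_P = {v, Sv, -v, -Sv}` and `(v | Sv)` has determinant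
`D = p² + q²`, a unit. Hence `A` is determined by `Av` and `A(Sv)`, both of which lie in `S_P`.
As `det A = 1`, the pair `(Av, A(Sv))` again has determinant `D`. If `A(Sv) = ±Av` this forces `D = 0`,
so the ring is trivial; if `A(Sv) = -S(Av)` it forces `2D = 0`, so `2 = 0` and `A(Sv) = S(Av)` as well.
In the remaining case `A(Sv) = S(Av)`, and `Av = Sⁱv` yields `A = Sⁱ`.
-/

/-- A matrix `[[a, b], [c, d]]` of determinant one that sends `(p, q)` to some `(x, y)` with
`x² + y² = p² + q²` and maps `(-q, p)`
into `{±(x, y), ±(-y, x)}` commutes with `S`; its first column is then read off from `(x, y)`. -/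
lemma entries_of_det_one {R : Type*} [CommRing R] {p q a b c d x y z w : R}
    (hpq : IsUnit (p ^ 2 + q ^ 2)) (hdet : a * d - b * c = 1)
    (hxy : x ^ 2 + y ^ 2 = p ^ 2 + q ^ 2)
    (hx : a * p + b * q = x) (hy : c * p + d * q = y)
    (hz : -(a * q) + b * p = z) (hw : -(c * q) + d * p = w)
    (h : (z = -y ∧ w = x) ∨ (z = y ∧ w = -x) ∨ (z = x ∧ w = y) ∨ (z = -x ∧ w = -y)) :
    d = a ∧ b = -c ∧ (p ^ 2 + q ^ 2) * a = x * p + y * q ∧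
      (p ^ 2 + q ^ 2) * c = y * p - x * q := by
  -- multiplicativity of the determinant
  have hD : x * w - y * z = p ^ 2 + q ^ 2 := by
    subst hx hy hz hw
    linear_combination (p ^ 2 + q ^ 2) * hdet
  have key : z = -y ∧ w = x := by
    rcases h with h | ⟨h1, h2⟩ | ⟨h1, h2⟩ | ⟨h1, h2⟩
    · exact h
    · have h0 : (p ^ 2 + q ^ 2) * 2 = 0 := by
        rw [h1, h2] at hD
        linear_combination -hD - hxy
      have h20 : (2 : R) = 0 := (hpq.mul_right_eq_zero).1 h0
      exact ⟨by linear_combination h1 + y * h20, by linear_combination h2 - x * h20⟩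
    all_goals
      have h0 : (p ^ 2 + q ^ 2) * 1 = 0 := by
        rw [h1, h2] at hD
        linear_combination -hD
      have h10 : (1 : R) = 0 := (hpq.mul_right_eq_zero).1 h0
      have := subsingleton_of_zero_eq_one h10.symm
      exact ⟨Subsingleton.elim _ _, Subsingleton.elim _ _⟩
  obtain ⟨h1, h2⟩ := key
  refine ⟨hpq.mul_left_cancel ?_, hpq.mul_left_cancel ?_, ?_, ?_⟩
  · linear_combination q * hy + p * hw - p * hx + q * hz + p * h2 + q * h1
  · linear_combination q * hx + p * hz + p * hy - q * hw + p * h1 - q * h2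
  · linear_combination p * hx - q * hz - q * h1
  · linear_combination p * hy - q * hw - q * h2

/-- stabilizer of the configuration `S_P = {(p,q),(-q,p),(-p,-q),(q,-p)}`
in `SL₂(ℤ/nℤ)` consists exactly of `I, -I, S, -S` with `S = [[0,-1],[1,0]]`,
provided `p² + q²` is a unit. -/
theorem stmt0 (n : ℕ) (hn : 1 ≤ n) (p q : ZMod n) (hpq : IsUnit (p ^ 2 + q ^ 2))
    (A : Matrix.SpecialLinearGroup (Fin 2) (ZMod n)) :
    ((fun v : Fin 2 → ZMod n => (A : Matrix (Fin 2) (Fin 2) (ZMod n)).mulVec v) ''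
        ({![p, q], ![-q, p], ![-p, -q], ![q, -p]} : Set (Fin 2 → ZMod n)) =
      ({![p, q], ![-q, p], ![-p, -q], ![q, -p]} : Set (Fin 2 → ZMod n))) ↔
      ((A : Matrix (Fin 2) (Fin 2) (ZMod n)) = 1 ∨
        (A : Matrix (Fin 2) (Fin 2) (ZMod n)) = -1 ∨
        (A : Matrix (Fin 2) (Fin 2) (ZMod n)) = !![0, -1; 1, 0] ∨
        (A : Matrix (Fin 2) (Fin 2) (ZMod n)) = -!![0, -1; 1, 0]) := by
  obtain ⟨A, hA⟩ := A
  obtain ⟨a, b, c, d, rfl⟩ : ∃ a b c d, A = !![a, b; c, d] :=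
    ⟨_, _, _, _, Matrix.eta_fin_two A⟩
  rw [Matrix.det_fin_two_of] at hA
  simp only [Set.image_insert_eq, Set.image_singleton]
  constructor
  · intro h
    have h1 : ∀ u ∈ ({![p, q], ![-q, p]} : Set (Fin 2 → ZMod n)),
        (!![a, b; c, d]).mulVec u ∈
          ({![p, q], ![-q, p], ![-p, -q], ![q, -p]} : Set (Fin 2 → ZMod n)) := by
      intro u hu
      rw [← h]
      rcases hu with rfl | rfl <;> simp
    have hv := h1 ![p, q] (by simp)
    have hSv := h1 ![-q, p] (by simp)
    simp only [Matrix.mulVec_cons, Matrix.mulVec_empty, Set.mem_insert_iff,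
      Set.mem_singleton_iff, funext_iff, Fin.forall_fin_two] at hv hSv
    simp at hv hSv
    clear h h1
    obtain ⟨x, hx⟩ : ∃ x, p * a + q * b = x := ⟨_, rfl⟩
    obtain ⟨y, hy⟩ : ∃ y, p * c + q * d = y := ⟨_, rfl⟩
    obtain ⟨z, hz⟩ : ∃ z, -(q * a) + p * b = z := ⟨_, rfl⟩
    obtain ⟨w, hw⟩ : ∃ w, -(q * c) + p * d = w := ⟨_, rfl⟩
    rw [hx, hy] at hv
    rw [hz, hw] at hSv
    have hxy : x ^ 2 + y ^ 2 = p ^ 2 + q ^ 2 := by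
      rcases hv with ⟨h1, h2⟩ | ⟨h1, h2⟩ | ⟨h1, h2⟩ | ⟨h1, h2⟩ <;> rw [h1, h2] <;> ring
    have h4 := entries_of_det_one (z := z) (w := w) hpq hA hxy
      (by linear_combination hx) (by linear_combination hy)
      (by linear_combination hz) (by linear_combination hw) (by
        rcases hv with ⟨h1, h2⟩ | ⟨h1, h2⟩ | ⟨h1, h2⟩ | ⟨h1, h2⟩ <;>
          rcases hSv with ⟨h3, h4⟩ | ⟨h3, h4⟩ | ⟨h3, h4⟩ | ⟨h3, h4⟩ <;>
          simp [h1, h2, h3, h4])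
    obtain ⟨rfl, rfl, ha, hc⟩ := h4
    have cancel : ∀ s t : ZMod n, (p ^ 2 + q ^ 2) * s = (p ^ 2 + q ^ 2) * t → s = t :=
      fun s t h => hpq.mul_left_cancel h
    rcases hv with ⟨h1, h2⟩ | ⟨h1, h2⟩ | ⟨h1, h2⟩ | ⟨h1, h2⟩
    · have := cancel d 1 (by grind)
      have := cancel c 0 (by grind)
      left; subst d c; simp [Matrix.one_fin_two]
    · have := cancel d 0 (by grind)
      have := cancel c 1 (by grind)
      right; right; left; subst d c; simp
    · have := cancel d (-1) (by grind)
      have := cancel c 0 (by grind)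
      right; left; subst d c; simp [Matrix.one_fin_two]
    · have := cancel d 0 (by grind)
      have := cancel c (-1) (by grind)
      right; right; right; subst d c; simp
  · have hS : ∀ x y : ZMod n, (!![0, -1; 1, 0]).mulVec ![x, y] = ![-y, x] := by
      intro x y
      ext i
      fin_cases i <;> simp
    rintro (h | h | h | h) <;> simp only [h] <;> ext u <;>
      simp [Matrix.neg_mulVec, hS, -Matrix.neg_of] <;> tauto
end

section
/- Let n be an odd positive integer and let Γ = {A ∈ SL₂(ℤ) : (A ≡ ±I or ±S mod n) and (A ≡ I or S mod 2)}, where S = [[0,−1],[1,0]]. Then Γ contains the principal congruence subgroup Γ(2n), and for every positive integer m such that Γ(m) ⊆ Γ, the integer 2n divides m. In particular, Γ is a congruence subgroup of SL₂(ℤ) of level exactly 2n. -/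
/-!
The inclusion `Γ(2n) ⊆ Γ` is reduction of a congruence modulo `2n` to its divisors `n` and `2`
(`red_eq_one_of_mem_Gamma`). For minimality, the unipotent matrix `T ^ m = [[1, m], [0, 1]]` lies
in `Γ(m)`, hence in `Γ`. Its diagonal entry `1` and lower-left entry `0` exclude congruence to
`±S` modulo `k` unless `ℤ/kℤ` is trivial, while congruence to `±I` forces `k ∣ m`
(`dvd_of_red_T_pow`). Taking `k = n` and `k = 2`, which are coprime as `n` is odd, gives `2n ∣ m`.
-/


open Matrix

/-- The matrix `S = [[0,-1],[1,0]]` over `ℤ/mℤ`. -/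
def Smat (m : ℕ) : Matrix (Fin 2) (Fin 2) (ZMod m) := !![0, -1; 1, 0]

/-- Entrywise reduction of an integer matrix modulo `m`. -/
def red (m : ℕ) (A : Matrix (Fin 2) (Fin 2) ℤ) : Matrix (Fin 2) (Fin 2) (ZMod m) :=
  A.map (Int.cast : ℤ → ZMod m)

lemma red_mul (m : ℕ) (A B : Matrix (Fin 2) (Fin 2) ℤ) :
    red m (A * B) = red m A * red m B :=
  Matrix.map_mul (f := Int.castRingHom (ZMod m))

lemma red_one (m : ℕ) : red m 1 = 1 :=
  Matrix.map_one _ Int.cast_zero Int.cast_one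

lemma Smat_mul_Smat (m : ℕ) : Smat m * Smat m = -1 := by
  ext i j
  fin_cases i <;> fin_cases j <;>
    simp [Smat, Matrix.mul_apply, Fin.sum_univ_two, Matrix.one_apply]

/-- `Γ_S(n)`: the subgroup of `SL₂(ℤ)` of matrices congruent to `I`, `-I`, `S` or `-S`
mod `n`, where `S = [[0,-1],[1,0]]`. -/
def GammaS (n : ℕ) : Subgroup (Matrix.SpecialLinearGroup (Fin 2) ℤ) where
  carrier := {A | red n ↑A = 1 ∨ red n ↑A = -1 ∨ red n ↑A = Smat n ∨ red n ↑A = -Smat n}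
  one_mem' := Or.inl (by rw [Matrix.SpecialLinearGroup.coe_one, red_one])
  mul_mem' := by
    rintro a b ha hb
    have hab : red n ↑(a * b) = red n ↑a * red n ↑b := by
      rw [Matrix.SpecialLinearGroup.coe_mul, red_mul]
    rcases ha with h | h | h | h <;> rcases hb with h' | h' | h' | h' <;>
      simp only [Set.mem_setOf_eq, hab, h, h', one_mul, mul_one, neg_mul, mul_neg,
        neg_neg, Smat_mul_Smat] <;> tauto
  inv_mem' := by
    intro a ha
    have key : ∀ X Y : Matrix (Fin 2) (Fin 2) (ZMod n),
        red n ↑a = X → X * Y = 1 → red n ↑(a⁻¹) = Y := by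
      intro X Y hX hXY
      have h1 : red n ↑(a⁻¹) * red n ↑a = 1 := by
        rw [← red_mul, ← Matrix.SpecialLinearGroup.coe_mul, inv_mul_cancel,
          Matrix.SpecialLinearGroup.coe_one, red_one]
      rw [hX] at h1
      exact left_inv_eq_right_inv h1 hXY
    rcases ha with h | h | h | h
    · exact Or.inl (key 1 1 h (by simp))
    · exact Or.inr (Or.inl (key (-1) (-1) h (by simp)))
    · exact Or.inr (Or.inr (Or.inr (key (Smat n) (-Smat n) h
        (by rw [mul_neg, Smat_mul_Smat, neg_neg]))))
    · exact Or.inr (Or.inr (Or.inl (key (-Smat n) (Smat n) h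
        (by rw [neg_mul, Smat_mul_Smat, neg_neg]))))

lemma Smat_mul_Smat_two : Smat 2 * Smat 2 = 1 := by
  rw [Smat_mul_Smat]; decide

/-- `Γ_{u,u}`: the subgroup of `SL₂(ℤ)` of matrices congruent to `I` or `S` mod `2`. -/
def GammaUU : Subgroup (Matrix.SpecialLinearGroup (Fin 2) ℤ) where
  carrier := {A | red 2 ↑A = 1 ∨ red 2 ↑A = Smat 2}
  one_mem' := Or.inl (by rw [Matrix.SpecialLinearGroup.coe_one, red_one])
  mul_mem' := by
    rintro a b ha hb
    have hab : red 2 ↑(a * b) = red 2 ↑a * red 2 ↑b := by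
      rw [Matrix.SpecialLinearGroup.coe_mul, red_mul]
    rcases ha with h | h <;> rcases hb with h' | h' <;>
      simp only [Set.mem_setOf_eq, hab, h, h', one_mul, mul_one, Smat_mul_Smat_two] <;>
      tauto
  inv_mem' := by
    intro a ha
    have key : ∀ X Y : Matrix (Fin 2) (Fin 2) (ZMod 2),
        red 2 ↑a = X → X * Y = 1 → red 2 ↑(a⁻¹) = Y := by
      intro X Y hX hXY
      have h1 : red 2 ↑(a⁻¹) * red 2 ↑a = 1 := by
        rw [← red_mul, ← Matrix.SpecialLinearGroup.coe_mul, inv_mul_cancel,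
          Matrix.SpecialLinearGroup.coe_one, red_one]
      rw [hX] at h1
      exact left_inv_eq_right_inv h1 hXY
    rcases ha with h | h
    · exact Or.inl (key 1 1 h (by simp))
    · exact Or.inr (key (Smat 2) (Smat 2) h Smat_mul_Smat_two)

lemma red_eq_one_of_mem_Gamma {k N : ℕ} (h : k ∣ N) {A : Matrix.SpecialLinearGroup (Fin 2) ℤ}
    (hA : A ∈ CongruenceSubgroup.Gamma N) : red k ↑A = 1 := by
  obtain ⟨h00, h01, h10, h11⟩ := CongruenceSubgroup.Gamma_mem.1 hA
  have e00 := congrArg (ZMod.castHom h (ZMod k)) h00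
  have e01 := congrArg (ZMod.castHom h (ZMod k)) h01
  have e10 := congrArg (ZMod.castHom h (ZMod k)) h10
  have e11 := congrArg (ZMod.castHom h (ZMod k)) h11
  simp only [map_intCast, map_one, map_zero] at e00 e01 e10 e11
  ext i j
  fin_cases i <;> fin_cases j <;> simp [red, e00, e01, e10, e11]

/-- The case `±S` can occur only in the trivial ring, since the upper-left entry of `T ^ m` is `1`
and that of `±S` is `0`. -/
lemma dvd_of_red_T_pow {k m : ℕ}
    (h : red k ↑(ModularGroup.T ^ m) = 1 ∨ red k ↑(ModularGroup.T ^ m) = -1 ∨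
      red k ↑(ModularGroup.T ^ m) = Smat k ∨ red k ↑(ModularGroup.T ^ m) = -Smat k) :
    k ∣ m := by
  have hT : ((ModularGroup.T ^ m : Matrix.SpecialLinearGroup (Fin 2) ℤ) :
      Matrix (Fin 2) (Fin 2) ℤ) = !![1, (m : ℤ); 0, 1] := by
    simpa using ModularGroup.coe_T_zpow (m : ℤ)
  rw [hT] at h
  rw [← ZMod.natCast_eq_zero_iff]
  rcases h with h | h | h | h
  · simpa [red] using congrFun (congrFun h 0) 1
  · simpa [red] using congrFun (congrFun h 0) 1
  all_goals
    have h1 : (1 : ZMod k) = 0 := by simpa [red, Smat] using congrFun (congrFun h 0) 0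
    exact eq_zero_of_zero_eq_one h1.symm _

/-- for odd `n`, the group `Γ = Γ_S ∩ Γ_{u,u}` (the Veech group of the
origami `D_P`) contains the principal congruence subgroup `Γ(2n)`, and any principal
congruence subgroup `Γ(m)` contained in it has `2n ∣ m`; i.e. `Γ` is a congruence
subgroup of level exactly `2n`. -/
theorem stmt3 (n : ℕ) (hodd : Odd n) (hpos : 0 < n) :
    CongruenceSubgroup.Gamma (2 * n) ≤ GammaS n ⊓ GammaUU ∧
      ∀ m : ℕ, 0 < m → CongruenceSubgroup.Gamma m ≤ GammaS n ⊓ GammaUU → 2 * n ∣ m := by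
  refine ⟨fun A hA => ⟨Or.inl (red_eq_one_of_mem_Gamma (dvd_mul_left n 2) hA),
    Or.inl (red_eq_one_of_mem_Gamma (dvd_mul_right 2 n) hA)⟩, fun m _ hle => ?_⟩
  have hT : ModularGroup.T ^ m ∈ CongruenceSubgroup.Gamma m := by
    simpa using CongruenceSubgroup.ModularGroup_T_pow_mem_Gamma m m dvd_rfl
  obtain ⟨hS, hU⟩ := hle hT
  have h2 : 2 ∣ m := dvd_of_red_T_pow (by rcases hU with h | h <;> tauto)
  exact (Nat.coprime_two_left.2 hodd).mul_dvd_of_dvd_of_dvd h2 (dvd_of_red_T_pow hS)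
end

section
/- Let n be an odd positive integer and let (p,q) ∈ (ℤ/nℤ)² be an element of additive order exactly n. Let S_P ⊆ (ℤ/nℤ)² be the set {(p,q), (−q,p), (−p,−q), (q,−p)}. Suppose A ∈ SL₂(ℤ/nℤ) and e ∈ (ℤ/nℤ)² are such that the affine map v ↦ A·v + e maps the set S_P onto itself. Then e = 0. -/
/-!
The centroid of `S_P` is the origin, and an affine bijection of a finite set preserves the sum of
its points. Unless `n = 1`, the four points of `S_P` are distinct: the quarter turn
`(x, y) ↦ (-y, x)` has `J - 1` of determinant `2`, a unit, so it and its square `-1` fix only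
the origin. Comparing the two sums gives `0 = A · 0 + 4 e`, and `4` is a unit because `n` is odd.
-/

theorem ZMod.eq_zero_of_add_self_of_odd {n : ℕ} (hodd : Odd n) {x : ZMod n} (hx : x + x = 0) :
    x = 0 := by
  have h2 : IsUnit ((2 : ℕ) : ZMod n) :=
    (ZMod.isUnit_iff_coprime 2 n).2 (Nat.coprime_two_left.2 hodd)
  apply h2.mul_left_cancel
  push_cast
  linear_combination hx

/-- for odd `n` and a point `(p,q)` of additive order exactly `n` in `(ℤ/nℤ)²`,
any affine map `v ↦ A·v + e` with `A ∈ SL₂(ℤ/nℤ)` mapping the configuration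
`S_P = {(p,q),(-q,p),(-p,-q),(q,-p)}` onto itself has translation part `e = 0`. -/
theorem stmt6 (n : ℕ) (hpos : 0 < n) (hodd : Odd n) (p q : ZMod n)
    (hord : addOrderOf (![p, q] : Fin 2 → ZMod n) = n)
    (A : Matrix.SpecialLinearGroup (Fin 2) (ZMod n)) (e : Fin 2 → ZMod n)
    (h : (fun v : Fin 2 → ZMod n =>
          (A : Matrix (Fin 2) (Fin 2) (ZMod n)).mulVec v + e) ''
        ({![p, q], ![-q, p], ![-p, -q], ![q, -p]} : Set (Fin 2 → ZMod n)) =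
        ({![p, q], ![-q, p], ![-p, -q], ![q, -p]} : Set (Fin 2 → ZMod n))) :
    e = 0 := by
  have two : ∀ x : ZMod n, x + x = 0 → x = 0 := fun x =>
    ZMod.eq_zero_of_add_self_of_odd hodd
  by_cases h0 : p = 0 ∧ q = 0
  · obtain ⟨rfl, rfl⟩ := h0
    have hz : (![0, 0] : Fin 2 → ZMod n) = 0 := by
      ext i; fin_cases i <;> rfl
    rw [hz, addOrderOf_zero] at hord
    subst hord
    exact Subsingleton.elim _ _
  -- Each equality between two of the points is excluded by one of the following two facts.
  have hneg : ¬(p = -p ∧ q = -q) := fun ⟨h1, h2⟩ =>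
    h0 ⟨two p (by linear_combination h1), two q (by linear_combination h2)⟩
  have hrot : ¬(p = -q ∧ q = p) := fun ⟨h1, h2⟩ =>
    h0 ⟨two p (by linear_combination h1 - h2), two q (by linear_combination h1 + h2)⟩
  have d12 : (![p, q] : Fin 2 → ZMod n) ≠ ![-q, p] := by
    simpa using hrot
  have d13 : (![p, q] : Fin 2 → ZMod n) ≠ ![-p, -q] := by
    simpa using hneg
  have d14 : (![p, q] : Fin 2 → ZMod n) ≠ ![q, -p] := by
    simp only [ne_eq, Matrix.vecCons_inj, and_true]
    grind
  have d23 : (![-q, p] : Fin 2 → ZMod n) ≠ ![-p, -q] := by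
    simp only [ne_eq, Matrix.vecCons_inj, and_true]
    grind
  have d24 : (![-q, p] : Fin 2 → ZMod n) ≠ ![q, -p] := by
    simp only [ne_eq, Matrix.vecCons_inj, and_true]
    grind
  have d34 : (![-p, -q] : Fin 2 → ZMod n) ≠ ![q, -p] := by
    simp only [ne_eq, Matrix.vecCons_inj, and_true]
    grind
  set f : (Fin 2 → ZMod n) → (Fin 2 → ZMod n) := fun v =>
    (A : Matrix (Fin 2) (Fin 2) (ZMod n)).mulVec v + e with hf
  let S : Finset (Fin 2 → ZMod n) := {![p, q], ![-q, p], ![-p, -q], ![q, -p]}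
  have hS : S.image f = S := by
    apply Finset.coe_injective
    simpa only [S, Finset.coe_image, Finset.coe_insert, Finset.coe_singleton] using h
  -- A self-surjection of a finite set is injective on it.
  have hinj : Set.InjOn f S := Finset.card_image_iff.1 (by rw [hS])
  have hsum : ∑ v ∈ S, v = ∑ v ∈ S, f v := by
    conv_lhs => rw [← hS]
    exact Finset.sum_image hinj
  have expand : ∀ g : (Fin 2 → ZMod n) → (Fin 2 → ZMod n),
      ∑ v ∈ S, g v = g ![p, q] + (g ![-q, p] + (g ![-p, -q] + g ![q, -p])) := by
    intro g
    simp only [S]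
    rw [Finset.sum_insert (by simp only [Finset.mem_insert, Finset.mem_singleton]; tauto),
      Finset.sum_insert (by simp only [Finset.mem_insert, Finset.mem_singleton]; tauto),
      Finset.sum_insert (by simpa only [Finset.mem_singleton] using d34),
      Finset.sum_singleton]
  rw [expand, expand f] at hsum
  ext i
  apply two
  apply two
  have hi := congrFun hsum i
  fin_cases i <;>
    simp [hf, Matrix.vecHead, Matrix.vecTail] at hi ⊢ <;>
    linear_combination -hi
end

section
/- Let p be an odd prime and let v, w ∈ 𝔽_p² be linearly independent vectors (equivalently, the 2×2 matrix with columns v and w has nonzero determinant). Then there exists B ∈ SL₂(𝔽_p) such that B·w = S·(B·v), where S = [[0,−1],[1,0]]. -/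
/-! Let `d ≠ 0` be the determinant of the matrix with columns `v, w`. Every element of `𝔽_p` is a
sum of two squares, so `d = a² + b²`. The linear map `B` sending `v` to `(a, b)` and `w` to
`S·(a, b) = (-b, a)` then has determinant `(a² + b²) / d = 1`. -/

/-- for an odd prime `p` and linearly independent `v, w ∈ 𝔽_p²`
there is `B ∈ SL₂(𝔽_p)` with `B·w = S·(B·v)`, where `S = [[0,-1],[1,0]]`. -/
theorem stmt7 (p : ℕ) [Fact p.Prime] (hp : p ≠ 2) (v w : Fin 2 → ZMod p)
    (h : (!![v 0, w 0; v 1, w 1] : Matrix (Fin 2) (Fin 2) (ZMod p)).det ≠ 0) :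
    ∃ B : Matrix.SpecialLinearGroup (Fin 2) (ZMod p),
      (B : Matrix (Fin 2) (Fin 2) (ZMod p)).mulVec w =
        (!![0, -1; 1, 0] : Matrix (Fin 2) (Fin 2) (ZMod p)).mulVec
          ((B : Matrix (Fin 2) (Fin 2) (ZMod p)).mulVec v) := by
  have hd : v 0 * w 1 - w 0 * v 1 ≠ 0 := by simpa [Matrix.det_fin_two] using h
  obtain ⟨a, b, hab⟩ := ZMod.sq_add_sq p (v 0 * w 1 - w 0 * v 1)
  -- The matrix with columns `(a, b)` and `(-b, a)`, times the inverse of the matrix `(v | w)`.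
  refine ⟨⟨(v 0 * w 1 - w 0 * v 1)⁻¹ • !![a * w 1 + b * v 1, -a * w 0 - b * v 0;
    b * w 1 - a * v 1, -b * w 0 + a * v 0], ?_⟩, ?_⟩
  · rw [Matrix.det_smul, Matrix.det_fin_two_of, Fintype.card_fin]
    field_simp
    linear_combination (v 0 * w 1 - w 0 * v 1) * hab
  · ext i
    fin_cases i <;> simp [Matrix.mulVec, dotProduct, Fin.sum_univ_two] <;> ring
end

section
/- Let p be a prime and let v = (a,b) and w = (c,d) be vectors in 𝔽_p² with ad − bc ≠ 0. Then there exists a matrix T ∈ SL₂(𝔽_p) with trace(T) = 0 and T·v = w. -/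
/-- for a prime `p` and vectors `v = (a,b)`, `w = (c,d)` in `𝔽_p²` with
`ad - bc ≠ 0`, there is a trace-zero `T ∈ SL₂(𝔽_p)` with `T·v = w`. -/
theorem stmt8 (p : ℕ) [Fact p.Prime] (v w : Fin 2 → ZMod p)
    (h : v 0 * w 1 - v 1 * w 0 ≠ 0) :
    ∃ T : Matrix.SpecialLinearGroup (Fin 2) (ZMod p),
      Matrix.trace (T : Matrix (Fin 2) (Fin 2) (ZMod p)) = 0 ∧
      (T : Matrix (Fin 2) (Fin 2) (ZMod p)).mulVec v = w := by
  -- In the basis `v, w`, take the quarter turn `v ↦ w`, `w ↦ -v`: it has trace `0` and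
  -- determinant `1`. Its standard matrix is `[w | -v] * [v | w]⁻¹`, written out entrywise here.
  obtain ⟨e, he⟩ : ∃ e, (v 0 * w 1 - v 1 * w 0) * e = 1 := ⟨_, mul_inv_cancel₀ h⟩
  refine ⟨⟨!![(v 0 * v 1 + w 0 * w 1) * e, -(v 0 ^ 2 + w 0 ^ 2) * e;
    (v 1 ^ 2 + w 1 ^ 2) * e, -(v 0 * v 1 + w 0 * w 1) * e], ?_⟩, ?_, ?_⟩
  · rw [Matrix.det_fin_two_of]
    linear_combination ((v 0 * w 1 - v 1 * w 0) * e + 1) * he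
  · rw [Matrix.trace_fin_two_of]
    ring
  · ext i
    fin_cases i
    · simp [Matrix.mulVec, dotProduct, Fin.sum_univ_two]
      linear_combination w 0 * he
    · simp [Matrix.mulVec, dotProduct, Fin.sum_univ_two]
      linear_combination w 1 * he
end

section
/- Let F₂ be the free group on two generators and let Q₈ be the quaternion group of order 8 (with elements ±1, ±i, ±j, ±k and relations i² = j² = k² = −1, ij = k = −ji). Then all surjective group homomorphisms F₂ → Q₈ have the same kernel. Consequently, this common kernel U is invariant under every automorphism of F₂, i.e. γ(U) = U for all γ ∈ Aut(F₂). -/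
/-!
Mathlib's `QuaternionGroup 2` is `Q₈`, generated by `i = a 1` and `j = xa 0`. If `f` is a surjection
`F₂ → Q₈`, then the images `x, y` of the free generators do not commute, since otherwise `Q₈`, which
they generate, would be abelian. Any non-commuting `x, y ∈ Q₈` satisfy the defining relations
`x⁴ = 1`, `y² = x²`, `x y = y x⁻¹` of `Q₈`, so that `i ↦ x`, `j ↦ y` defines an endomorphism `φ` of
`Q₈` (`quatEnd`), and `f = φ ∘ h` with `h` the standard surjection `F₂ → Q₈`. As `f` is surjective,
so is `φ`; since `Q₈` is finite, `φ` is injective and `ker f = ker h` (`ker_eq_ker_stdHom`).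

If `γ` is an automorphism of `F₂`, then `γ (ker f) = ker (f ∘ γ⁻¹)`, and `f ∘ γ⁻¹` is again
surjective, whence the invariance.
-/

/-- If the images of the two free generators commute, then a surjection from `F₂` has commutative
target. -/
lemma comm_of_surjective {G : Type*} [Group G] (f : FreeGroup (Fin 2) →* G)
    (hf : Function.Surjective f)
    (h : f (.of 0) * f (.of 1) = f (.of 1) * f (.of 0)) (p q : G) : p * q = q * p := by
  -- An element commuting with the images of both generators is central: conjugation by it
  -- agrees with the identity on the image of `f`.
  have central (z : G) (h0 : z * f (.of 0) = f (.of 0) * z) (h1 : z * f (.of 1) = f (.of 1) * z)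
      (q : G) : z * q = q * z := by
    have key : (MulAut.conj z).toMonoidHom.comp f = f := by
      ext i
      fin_cases i
      · simp [h0]
      · simp [h1]
    obtain ⟨w, rfl⟩ := hf q
    have hw := DFunLike.congr_fun key w
    simpa [mul_inv_eq_iff_eq_mul] using hw
  exact central p (central _ rfl h p).symm (central _ h.symm rfl p).symm q

open QuaternionGroup in
/-- The endomorphism of `Q₈` with `i = a 1 ↦ x` and `j = xa 0 ↦ y`, for non-commuting `x, y`. It
is given on normal forms, `iᵏ ↦ xᵏ` and `j iᵏ ↦ y xᵏ`. -/
def quatEnd (x y : QuaternionGroup 2) (h : x * y ≠ y * x) :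
    QuaternionGroup 2 →* QuaternionGroup 2 :=
  MonoidHom.mk'
    (fun
      | a k => x ^ k.val
      | xa k => y * x ^ k.val)
    (by
      have key : ∀ x y : QuaternionGroup 2, x * y ≠ y * x →
          x ^ 4 = 1 ∧ y * y = x ^ 2 ∧ x * y = y * x ^ 3 := by decide
      obtain ⟨h4, hyy, hxy⟩ := key x y h
      have hcomm : ∀ k : ℕ, x ^ k * y = y * x ^ (3 * k) := by
        intro k
        rw [pow_mul]
        exact (SemiconjBy.pow_right (show SemiconjBy y (x ^ 3) x from hxy.symm) k).symm
      have hmod : ∀ m n : ℕ, m % 4 = n % 4 → x ^ m = x ^ n := by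
        intro m n hmn
        rw [pow_eq_pow_mod m h4, pow_eq_pow_mod n h4, hmn]
      rintro (i | i) (j | j)
      · simp only [a_mul_a, ← pow_add]
        exact hmod _ _ (by revert i j; decide)
      · simp only [a_mul_xa, ← mul_assoc, hcomm]
        rw [mul_assoc, ← pow_add]
        exact congrArg (y * ·) (hmod _ _ (by revert i j; decide))
      · simp only [xa_mul_a, mul_assoc, ← pow_add]
        exact congrArg (y * ·) (hmod _ _ (by revert i j; decide))
      · simp only [xa_mul_xa]
        rw [mul_assoc, ← mul_assoc (x ^ _) y, hcomm, mul_assoc y, ← mul_assoc y y, hyy,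
          ← pow_add, ← pow_add]
        exact hmod _ _ (by revert i j; decide))

/-- The standard surjection `F₂ → Q₈`, sending the free generators to `i` and `j`. -/
def stdHom : FreeGroup (Fin 2) →* QuaternionGroup 2 :=
  FreeGroup.lift ![.a 1, .xa 0]

lemma ker_eq_ker_stdHom (f : FreeGroup (Fin 2) →* QuaternionGroup 2)
    (hf : Function.Surjective f) : f.ker = stdHom.ker := by
  have hne : f (.of 0) * f (.of 1) ≠ f (.of 1) * f (.of 0) := fun h =>
    absurd (comm_of_surjective f hf h (.a 1) (.xa 0)) (by decide)
  have hfac : f = (quatEnd _ _ hne).comp stdHom := by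
    ext i
    fin_cases i
    · change _ = f (.of 0) ^ 1
      simp
    · change _ = f (.of 1) * f (.of 0) ^ 0
      simp
  have hsurj : Function.Surjective (quatEnd _ _ hne) := by
    refine Function.Surjective.of_comp (g := stdHom) ?_
    rw [← MonoidHom.coe_comp, ← hfac]
    exact hf
  have hinj : Function.Injective (quatEnd _ _ hne) := Finite.injective_iff_surjective.mpr hsurj
  calc f.ker = ((quatEnd _ _ hne).comp stdHom).ker := congrArg MonoidHom.ker hfac
    _ = stdHom.ker := by
      rw [← MonoidHom.comap_ker, (MonoidHom.ker_eq_bot_iff _).mpr hinj, MonoidHom.comap_bot]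

/-- all surjective homomorphisms from the free group `F₂` onto the
quaternion group `Q₈` have the same kernel; consequently this common kernel is
invariant under every automorphism of `F₂`. -/
theorem stmt9 :
    (∀ f g : FreeGroup (Fin 2) →* QuaternionGroup 2,
        Function.Surjective f → Function.Surjective g → f.ker = g.ker) ∧
      (∀ f : FreeGroup (Fin 2) →* QuaternionGroup 2, Function.Surjective f →
        ∀ γ : FreeGroup (Fin 2) ≃* FreeGroup (Fin 2),
          Subgroup.map γ.toMonoidHom f.ker = f.ker) := by
  have same : ∀ f g : FreeGroup (Fin 2) →* QuaternionGroup 2,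
      Function.Surjective f → Function.Surjective g → f.ker = g.ker := fun f g hf hg =>
    (ker_eq_ker_stdHom f hf).trans (ker_eq_ker_stdHom g hg).symm
  refine ⟨same, fun f hf γ => ?_⟩
  have hmap : Subgroup.map γ.toMonoidHom f.ker = (f.comp γ.symm.toMonoidHom).ker := by
    rw [← MonoidHom.comap_ker]
    exact Subgroup.map_equiv_eq_comap_symm γ f.ker
  rw [hmap]
  exact same _ _ (hf.comp γ.symm.surjective) hf
end

section
/- For complex numbers a, b, c, consider the homogeneous quartic polynomial f = x⁴ + y⁴ + z⁴ + 2a·x²y² + 2b·x²z² + 2c·y²z² in ℂ[x,y,z]. The plane projective curve defined by f is singular — i.e. there exists (x₀,y₀,z₀) ∈ ℂ³ with (x₀,y₀,z₀) ≠ (0,0,0) at which all three partial derivatives ∂f/∂x, ∂f/∂y, ∂f/∂z vanish — if and only if a² = 1 or b² = 1 or c² = 1 or a² + b² + c² − 2abc − 1 = 0. -/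
/-!
The partial derivatives of `fabc a b c` at `(x, y, z)` are `4x`, `4y`, `4z` times the three entries
of `M (x², y², z²)ᵀ`, where `M = !![1, a, b; a, 1, c; b, c, 1]`, and
`det M = 1 + 2abc - a² - b² - c²`.

At a singular point with nonzero coordinates, `M` kills the nonzero vector `(x², y², z²)`, so
`det M = 0`. If exactly one coordinate vanishes, the same argument applies to a principal `2 × 2`
minor of `M`, which is `1 - a²`, `1 - b²` or `1 - c²`; two coordinates cannot vanish, since the
diagonal entries of `M` are nonzero. Conversely, a kernel vector of `M`, or of a principal
`2 × 2` submatrix (padded by zero), gives a singular point by taking square roots of its entries.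
-/

open MvPolynomial

/-- The quartic `f_{abc} = x⁴ + y⁴ + z⁴ + 2a·x²y² + 2b·x²z² + 2c·y²z²`. -/
noncomputable def fabc (a b c : ℂ) : MvPolynomial (Fin 3) ℂ :=
  X 0 ^ 4 + X 1 ^ 4 + X 2 ^ 4 + C (2 * a) * (X 0 ^ 2 * X 1 ^ 2) +
    C (2 * b) * (X 0 ^ 2 * X 2 ^ 2) + C (2 * c) * (X 1 ^ 2 * X 2 ^ 2)

/-- Singularity of `fabc a b c` in coordinates, with the factors `4` of the partial derivatives
removed. -/
lemma singular_iff (a b c : ℂ) :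
    (∃ P : Fin 3 → ℂ, P ≠ 0 ∧ ∀ i : Fin 3, eval P (pderiv i (fabc a b c)) = 0) ↔
      ∃ x y z : ℂ, ¬(x = 0 ∧ y = 0 ∧ z = 0) ∧
        x * (x ^ 2 + a * y ^ 2 + b * z ^ 2) = 0 ∧
        y * (a * x ^ 2 + y ^ 2 + c * z ^ 2) = 0 ∧
        z * (b * x ^ 2 + c * y ^ 2 + z ^ 2) = 0 := by
  have h0 (P : Fin 3 → ℂ) : eval P (pderiv 0 (fabc a b c)) =
      4 * (P 0 * (P 0 ^ 2 + a * P 1 ^ 2 + b * P 2 ^ 2)) := by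
    simp [fabc, Derivation.leibniz, Derivation.leibniz_pow, pderiv_X]
    ring
  have h1 (P : Fin 3 → ℂ) : eval P (pderiv 1 (fabc a b c)) =
      4 * (P 1 * (a * P 0 ^ 2 + P 1 ^ 2 + c * P 2 ^ 2)) := by
    simp [fabc, Derivation.leibniz, Derivation.leibniz_pow, pderiv_X]
    ring
  have h2 (P : Fin 3 → ℂ) : eval P (pderiv 2 (fabc a b c)) =
      4 * (P 2 * (b * P 0 ^ 2 + c * P 1 ^ 2 + P 2 ^ 2)) := by
    simp [fabc, Derivation.leibniz, Derivation.leibniz_pow, pderiv_X]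
    ring
  have h4 : (4 : ℂ) ≠ 0 := by norm_num
  simp only [Fin.forall_fin_succ, Fin.succ_zero_eq_one, Fin.succ_one_eq_two, IsEmpty.forall_iff,
    and_true, h0, h1, h2, mul_eq_zero_iff_left h4, ne_eq, funext_iff, Pi.zero_apply]
  constructor
  · rintro ⟨P, hP⟩
    exact ⟨P 0, P 1, P 2, hP⟩
  · rintro ⟨x, y, z, h⟩
    exact ⟨![x, y, z], h⟩

/-- A `2 × 2` symmetric matrix with unit diagonal and a kernel vector whose second entry is
nonzero has off-diagonal entry of square `1`. -/
lemma sq_eq_one_of_kernel {a u v : ℂ} (hv : v ≠ 0) (h1 : u + a * v = 0) (h2 : a * u + v = 0) :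
    a ^ 2 = 1 := by
  refine mul_right_cancel₀ hv ?_
  linear_combination a * h1 - h2

/-- the plane projective quartic `f_{abc} = 0` is singular iff
`a² = 1` or `b² = 1` or `c² = 1` or `a² + b² + c² − 2abc − 1 = 0`. -/
theorem stmt11 (a b c : ℂ) :
    (∃ P : Fin 3 → ℂ, P ≠ 0 ∧ ∀ i : Fin 3, eval P (pderiv i (fabc a b c)) = 0) ↔
      (a ^ 2 = 1 ∨ b ^ 2 = 1 ∨ c ^ 2 = 1 ∨
        a ^ 2 + b ^ 2 + c ^ 2 - 2 * a * b * c - 1 = 0) := by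
  rw [singular_iff]
  constructor
  · rintro ⟨x, y, z, hne, hx, hy, hz⟩
    rcases eq_or_ne x 0 with rfl | x0 <;> rcases eq_or_ne y 0 with rfl | y0 <;>
      rcases eq_or_ne z 0 with rfl | z0 <;>
      simp_all only [ne_eq, not_true_eq_false, mul_eq_zero, false_or, true_or, and_self, and_true,
        zero_pow two_ne_zero, mul_zero, add_zero, zero_add, pow_eq_zero_iff two_ne_zero]
    · exact .inr (.inr (.inl (sq_eq_one_of_kernel (pow_ne_zero 2 z0) hy hz)))
    · exact .inr (.inl (sq_eq_one_of_kernel (pow_ne_zero 2 z0) hx hz))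
    · exact .inl (sq_eq_one_of_kernel (pow_ne_zero 2 y0) hx hy)
    · refine .inr (.inr (.inr (mul_right_cancel₀ (pow_ne_zero 2 z0) ?_)))
      -- the coefficients are the last row of the adjugate of `M`, negated
      linear_combination (b - a * c) * hx + (c - a * b) * hy + (a ^ 2 - 1) * hz
  · rintro (h | h | h | h)
    · obtain ⟨t, ht⟩ := IsAlgClosed.exists_pow_nat_eq (-a) two_pos
      refine ⟨t, 1, 0, by simp, ?_, ?_, ?_⟩
      · linear_combination t * ht
      · linear_combination a * ht - h
      · ring
    · obtain ⟨t, ht⟩ := IsAlgClosed.exists_pow_nat_eq (-b) two_pos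
      refine ⟨t, 0, 1, by simp, ?_, ?_, ?_⟩
      · linear_combination t * ht
      · ring
      · linear_combination b * ht - h
    · obtain ⟨t, ht⟩ := IsAlgClosed.exists_pow_nat_eq (-c) two_pos
      refine ⟨0, t, 1, by simp, ?_, ?_, ?_⟩
      · ring
      · linear_combination t * ht
      · linear_combination c * ht - h
    · have hdet : (!![1, a, b; a, 1, c; b, c, 1] : Matrix (Fin 3) (Fin 3) ℂ).det = 0 := by
        rw [Matrix.det_fin_three]
        simp
        linear_combination -h
      obtain ⟨v, hv, hMv⟩ := Matrix.exists_mulVec_eq_zero_iff.mpr hdet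
      obtain ⟨x, hx⟩ := IsAlgClosed.exists_pow_nat_eq (v 0) two_pos
      obtain ⟨y, hy⟩ := IsAlgClosed.exists_pow_nat_eq (v 1) two_pos
      obtain ⟨z, hz⟩ := IsAlgClosed.exists_pow_nat_eq (v 2) two_pos
      have e0 := congrFun hMv 0
      have e1 := congrFun hMv 1
      have e2 := congrFun hMv 2
      simp [Matrix.mulVec, dotProduct, Fin.sum_univ_three] at e0 e1 e2
      refine ⟨x, y, z, ?_, ?_, ?_, ?_⟩
      · rintro ⟨rfl, rfl, rfl⟩
        refine hv (funext fun i => ?_)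
        fin_cases i
        · simpa using hx.symm
        · simpa using hy.symm
        · simpa using hz.symm
      · rw [hx, hy, hz, e0, mul_zero]
      · rw [hx, hy, hz, e1, mul_zero]
      · rw [hx, hy, hz, e2, mul_zero]
end

section
/- Let g = (a²−1)(b²−1)(c²−1)(a²+b²+c²−2abc−1) ∈ ℂ[a,b,c], V ⊆ ℂ³ its zero set, U = ℂ³ \ V, and for (a,b,c) ∈ ℂ³ let f_{abc} = x⁴ + y⁴ + z⁴ + 2a·x²y² + 2b·x²z² + 2c·y²z² ∈ ℂ[x,y,z]. Suppose A ∈ GL₃(ℂ) is such that for every (a,b,c) ∈ U there exists λ ∈ ℂ* with f_{abc}(A·(x,y,z)) = λ·f_{abc}(x,y,z) as polynomials. Then there exist μ ∈ ℂ* and signs ε₁, ε₂, ε₃ ∈ {1,−1} such that A = μ·diag(ε₁, ε₂, ε₃). -/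
/-!
Comparing the hypothesis at `(a, 0, 0)` for `a = 0, 2, 3` shows that the factor `λ` is the same for
all three parameters, so `A` rescales `x²y²` by a single constant `L`; by symmetry it rescales
`x²z²`, `y²z²` and `x⁴ + y⁴ + z⁴` by the same `L` (`scale_monomials`).
Evaluating the three monomials at `eᵢ` shows that each column of `A` has at most one nonzero entry,
and evaluating them at `eᵢ + eⱼ` shows that this entry is on the diagonal.
Then `L = A₀₀⁴ = A₀₀²A₁₁² = A₀₀²A₂₂²`, so the squares of the diagonal entries agree.
-/

open MvPolynomial Matrix

/-- The linear substitution of variables given by a matrix `A`. -/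
noncomputable def substMat (A : Matrix (Fin 3) (Fin 3) ℂ) :
    MvPolynomial (Fin 3) ℂ →ₐ[ℂ] MvPolynomial (Fin 3) ℂ :=
  aeval fun i => ∑ j : Fin 3, C (A i j) * X j

/-- The polynomial function of `fabc a b c`. -/
def quartic (a b c : ℂ) (x y z : ℂ) : ℂ :=
  x ^ 4 + y ^ 4 + z ^ 4 + 2 * a * (x ^ 2 * y ^ 2) + 2 * b * (x ^ 2 * z ^ 2) +
    2 * c * (y ^ 2 * z ^ 2)

lemma quartic_subst (M : Matrix (Fin 3) (Fin 3) ℂ) (a b c lam : ℂ)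
    (h : substMat M (fabc a b c) = C lam * fabc a b c) (x y z : ℂ) :
    quartic a b c (M 0 0 * x + M 0 1 * y + M 0 2 * z) (M 1 0 * x + M 1 1 * y + M 1 2 * z)
      (M 2 0 * x + M 2 1 * y + M 2 2 * z) = lam * quartic a b c x y z := by
  have := congrArg (eval ![x, y, z]) h
  simpa [substMat, fabc, quartic, Fin.sum_univ_three] using this

/-- If `n + 2ap` is sent to `λₐ (n + 2ap)` for `a = 0, 2, 3`, then `p` is sent to `λ₀ p`. The points
`u`, `w` with `(n, p) = (1, 0)` and `(2, 1)` separate the two functions. Here `n'` and `p'` are the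
transforms of `n` and `p`. -/
lemma scale_of_pencil {T : Type*} (n p n' p' : T → ℂ) (l₀ l₂ l₃ : ℂ)
    (h₀ : ∀ v, n' v = l₀ * n v)
    (h₂ : ∀ v, n' v + 4 * p' v = l₂ * (n v + 4 * p v))
    (h₃ : ∀ v, n' v + 6 * p' v = l₃ * (n v + 6 * p v))
    (u w : T) (hu : n u = 1) (hu' : p u = 0) (hw : n w = 2) (hw' : p w = 1) (v : T) :
    p' v = l₀ * p v := by
  have e : l₂ = l₀ := by
    have a₀ := h₀ u
    have a₂ := h₂ u
    have a₃ := h₃ u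
    have b₀ := h₀ w
    have b₂ := h₂ w
    have b₃ := h₃ w
    rw [hu] at a₀ a₂ a₃
    rw [hu'] at a₂ a₃
    rw [hw] at b₀ b₂ b₃
    rw [hw'] at b₂ b₃
    linear_combination (4 / 3 : ℂ) * (2 * a₃ - 3 * a₂ + a₀) - (1 / 6 : ℂ) * (2 * b₃ - 3 * b₂ + b₀)
  have := h₂ v
  rw [e] at this
  linear_combination (1 / 4 : ℂ) * this - (1 / 4 : ℂ) * h₀ v

/-- `A` multiplies `x⁴ + y⁴ + z⁴`, `x²y²`, `x²z²` and `y²z²` by one common nonzero constant. -/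
lemma scale_monomials (M : Matrix (Fin 3) (Fin 3) ℂ)
    (h : ∀ a b c : ℂ,
      (a ^ 2 - 1) * (b ^ 2 - 1) * (c ^ 2 - 1) *
          (a ^ 2 + b ^ 2 + c ^ 2 - 2 * a * b * c - 1) ≠ 0 →
      ∃ lam : ℂ, lam ≠ 0 ∧ substMat M (fabc a b c) = C lam * fabc a b c) :
    ∃ L : ℂ, L ≠ 0 ∧ ∀ x y z : ℂ,
      let X := M 0 0 * x + M 0 1 * y + M 0 2 * z
      let Y := M 1 0 * x + M 1 1 * y + M 1 2 * z
      let Z := M 2 0 * x + M 2 1 * y + M 2 2 * z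
      X ^ 4 + Y ^ 4 + Z ^ 4 = L * (x ^ 4 + y ^ 4 + z ^ 4) ∧
      X ^ 2 * Y ^ 2 = L * (x ^ 2 * y ^ 2) ∧
      X ^ 2 * Z ^ 2 = L * (x ^ 2 * z ^ 2) ∧
      Y ^ 2 * Z ^ 2 = L * (y ^ 2 * z ^ 2) := by
  have key (a b c : ℂ) (hg : (a ^ 2 - 1) * (b ^ 2 - 1) * (c ^ 2 - 1) *
          (a ^ 2 + b ^ 2 + c ^ 2 - 2 * a * b * c - 1) ≠ 0) :
      ∃ lam : ℂ, lam ≠ 0 ∧ ∀ x y z : ℂ,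
        quartic a b c (M 0 0 * x + M 0 1 * y + M 0 2 * z) (M 1 0 * x + M 1 1 * y + M 1 2 * z)
          (M 2 0 * x + M 2 1 * y + M 2 2 * z) = lam * quartic a b c x y z := by
    obtain ⟨lam, hl, he⟩ := h a b c hg
    exact ⟨lam, hl, quartic_subst M a b c lam he⟩
  obtain ⟨L, hL, k₀⟩ := key 0 0 0 (by norm_num)
  obtain ⟨a₂, -, ka₂⟩ := key 2 0 0 (by norm_num)
  obtain ⟨a₃, -, ka₃⟩ := key 3 0 0 (by norm_num)
  obtain ⟨b₂, -, kb₂⟩ := key 0 2 0 (by norm_num)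
  obtain ⟨b₃, -, kb₃⟩ := key 0 3 0 (by norm_num)
  obtain ⟨c₂, -, kc₂⟩ := key 0 0 2 (by norm_num)
  obtain ⟨c₃, -, kc₃⟩ := key 0 0 3 (by norm_num)
  unfold quartic at *
  let X (v : ℂ × ℂ × ℂ) := M 0 0 * v.1 + M 0 1 * v.2.1 + M 0 2 * v.2.2
  let Y (v : ℂ × ℂ × ℂ) := M 1 0 * v.1 + M 1 1 * v.2.1 + M 1 2 * v.2.2
  let Z (v : ℂ × ℂ × ℂ) := M 2 0 * v.1 + M 2 1 * v.2.1 + M 2 2 * v.2.2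
  refine ⟨L, hL, fun x y z => ⟨?_, ?_, ?_, ?_⟩⟩
  · linear_combination k₀ x y z
  · exact scale_of_pencil (fun v : ℂ × ℂ × ℂ => v.1 ^ 4 + v.2.1 ^ 4 + v.2.2 ^ 4)
      (fun v => v.1 ^ 2 * v.2.1 ^ 2) (fun v => X v ^ 4 + Y v ^ 4 + Z v ^ 4)
      (fun v => X v ^ 2 * Y v ^ 2) L a₂ a₃
      (fun v => by linear_combination k₀ v.1 v.2.1 v.2.2)
      (fun v => by linear_combination ka₂ v.1 v.2.1 v.2.2)
      (fun v => by linear_combination ka₃ v.1 v.2.1 v.2.2)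
      (0, 0, 1) (1, 1, 0) (by norm_num) (by norm_num) (by norm_num) (by norm_num) (x, y, z)
  · exact scale_of_pencil (fun v : ℂ × ℂ × ℂ => v.1 ^ 4 + v.2.1 ^ 4 + v.2.2 ^ 4)
      (fun v => v.1 ^ 2 * v.2.2 ^ 2) (fun v => X v ^ 4 + Y v ^ 4 + Z v ^ 4)
      (fun v => X v ^ 2 * Z v ^ 2) L b₂ b₃
      (fun v => by linear_combination k₀ v.1 v.2.1 v.2.2)
      (fun v => by linear_combination kb₂ v.1 v.2.1 v.2.2)
      (fun v => by linear_combination kb₃ v.1 v.2.1 v.2.2)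
      (0, 1, 0) (1, 0, 1) (by norm_num) (by norm_num) (by norm_num) (by norm_num) (x, y, z)
  · exact scale_of_pencil (fun v : ℂ × ℂ × ℂ => v.1 ^ 4 + v.2.1 ^ 4 + v.2.2 ^ 4)
      (fun v => v.2.1 ^ 2 * v.2.2 ^ 2) (fun v => X v ^ 4 + Y v ^ 4 + Z v ^ 4)
      (fun v => Y v ^ 2 * Z v ^ 2) L c₂ c₃
      (fun v => by linear_combination k₀ v.1 v.2.1 v.2.2)
      (fun v => by linear_combination kc₂ v.1 v.2.1 v.2.2)
      (fun v => by linear_combination kc₃ v.1 v.2.1 v.2.2)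
      (1, 0, 0) (0, 1, 1) (by norm_num) (by norm_num) (by norm_num) (by norm_num) (x, y, z)

/-- if `A ∈ GL₃(ℂ)` satisfies `f_{abc} ∘ A = λ·f_{abc}` (for some `λ ≠ 0`)
for every `(a,b,c)` in `U = ℂ³ ∖ V(g)`, then `A` is a nonzero scalar multiple of a
diagonal matrix with entries `±1`. -/
theorem stmt13 (A : GL (Fin 3) ℂ)
    (h : ∀ a b c : ℂ,
      (a ^ 2 - 1) * (b ^ 2 - 1) * (c ^ 2 - 1) *
          (a ^ 2 + b ^ 2 + c ^ 2 - 2 * a * b * c - 1) ≠ 0 →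
      ∃ lam : ℂ, lam ≠ 0 ∧
        substMat (A : Matrix (Fin 3) (Fin 3) ℂ) (fabc a b c) = C lam * fabc a b c) :
    ∃ (mu : ℂ) (e : Fin 3 → ℂ), mu ≠ 0 ∧ (∀ i, e i = 1 ∨ e i = -1) ∧
      (A : Matrix (Fin 3) (Fin 3) ℂ) = mu • Matrix.diagonal e := by
  obtain ⟨L, hL, k⟩ := scale_monomials _ h
  generalize (A : Matrix (Fin 3) (Fin 3) ℂ) = M at k ⊢
  -- At `eᵢ` all three monomials vanish: two entries of one column cannot both be nonzero.
  have x₁ := k 1 0 0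
  have x₂ := k 0 1 0
  have x₃ := k 0 0 1
  -- At `eᵢ + eⱼ` the corresponding monomial is nonzero.
  have y₁ := (k 1 1 0).2.1
  have y₂ := (k 1 0 1).2.2.1
  have y₃ := (k 0 1 1).2.2.2
  clear h k
  simp at x₁ x₂ x₃ y₁ y₂ y₃
  obtain ⟨n₁, p₁, q₁, r₁⟩ := x₁
  obtain ⟨n₂, p₂, q₂, r₂⟩ := x₂
  obtain ⟨n₃, p₃, q₃, r₃⟩ := x₃
  have f₁ : M 0 0 + M 0 1 ≠ 0 ∧ M 1 0 + M 1 1 ≠ 0 := by simpa [← y₁] using hL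
  have f₂ : M 0 0 + M 0 2 ≠ 0 ∧ M 2 0 + M 2 2 ≠ 0 := by simpa [← y₂] using hL
  have f₃ : M 1 1 + M 1 2 ≠ 0 ∧ M 2 1 + M 2 2 ≠ 0 := by simpa [← y₃] using hL
  have m10 : M 1 0 = 0 := by clear n₁ n₂ n₃ y₁ y₂ y₃; grind
  have m20 : M 2 0 = 0 := by clear n₁ n₂ n₃ y₁ y₂ y₃; grind
  have m01 : M 0 1 = 0 := by clear n₁ n₂ n₃ y₁ y₂ y₃; grind
  have m21 : M 2 1 = 0 := by clear n₁ n₂ n₃ y₁ y₂ y₃; grind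
  have m02 : M 0 2 = 0 := by clear n₁ n₂ n₃ y₁ y₂ y₃; grind
  have m12 : M 1 2 = 0 := by clear n₁ n₂ n₃ y₁ y₂ y₃; grind
  simp [m10, m20, m01, m02] at n₁ y₁ y₂
  have h0 : M 0 0 ≠ 0 := by
    intro h0
    simp [h0] at n₁
    exact hL n₁.symm
  have s₁ : M 1 1 ^ 2 = M 0 0 ^ 2 :=
    mul_left_cancel₀ (pow_ne_zero 2 h0) (by linear_combination y₁ - n₁)
  have s₂ : M 2 2 ^ 2 = M 0 0 ^ 2 :=
    mul_left_cancel₀ (pow_ne_zero 2 h0) (by linear_combination y₂ - n₁)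
  refine ⟨M 0 0, ![1, M 1 1 / M 0 0, M 2 2 / M 0 0], h0, ?_, ?_⟩
  · intro i
    fin_cases i
    · simp
    · exact sq_eq_sq_iff_eq_or_eq_neg.mp (by simp; field_simp; exact sq_eq_sq_iff_eq_or_eq_neg.mp s₁)
    · exact sq_eq_sq_iff_eq_or_eq_neg.mp (by simp; field_simp; exact sq_eq_sq_iff_eq_or_eq_neg.mp s₂)
  · ext i j
    fin_cases i <;> fin_cases j <;> simp [*, mul_div_cancel₀]
end

section
/- Let g, V, U, f_{abc} be as follows: g = (a²−1)(b²−1)(c²−1)(a²+b²+c²−2abc−1) ∈ ℂ[a,b,c] with zero set V ⊆ ℂ³ and U = ℂ³ \ V, and f_{abc} = x⁴ + y⁴ + z⁴ + 2a·x²y² + 2b·x²z² + 2c·y²z² ∈ ℂ[x,y,z]. Let A ∈ GL₃(ℂ) be a matrix of the block form [[v,0,0],[0,r,s],[0,t,u]]. Then the following are equivalent: (i) for every (a,b,c) ∈ U there exist (a′,b′,c′) ∈ ℂ³ and λ ∈ ℂ* with f_{abc}(A·(x,y,z)) = λ·f_{a′b′c′}(x,y,z) as polynomials; (ii) either s = t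 = 0 and r⁴ = u⁴ = v⁴, or r = u = 0 and s⁴ = t⁴ = v⁴. -/
/-!
Over the infinite field `ℂ` a polynomial identity is an identity of functions, so everything is
read off from values (`eval_subst_fabc`, `eval_fabc`).

Every quartic `fabc` is even in each variable, so the coefficient `4v²(a·rs + b·tu)` of `x²yz`
in `f_{abc} ∘ A` must vanish. Taking `(a,b,c) = (2,0,0)` and `(0,2,0)`, which lie in `U`, yields
`rs = 0` and `tu = 0`; invertibility of `A` then forces `s = t = 0` or `r = u = 0`. Comparing the
coefficients of `x⁴, y⁴, z⁴` for `(a,b,c) = (0,0,0)` gives the equalities of fourth powers.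
Conversely, a monomial matrix of one of the two shapes only rescales, or rescales and permutes, the
monomials of `f_{abc}`, with common factor `v⁴` on the fourth powers.
-/

open MvPolynomial Matrix

lemma eval_fabc (a b c : ℂ) (p : Fin 3 → ℂ) :
    eval p (fabc a b c) = p 0 ^ 4 + p 1 ^ 4 + p 2 ^ 4 + 2 * a * (p 0 ^ 2 * p 1 ^ 2) +
      2 * b * (p 0 ^ 2 * p 2 ^ 2) + 2 * c * (p 1 ^ 2 * p 2 ^ 2) := by
  simp [fabc]

lemma eval_subst_fabc (v r s t u a b c : ℂ) (p : Fin 3 → ℂ) :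
    eval p (substMat (!![v, 0, 0; 0, r, s; 0, t, u] : Matrix (Fin 3) (Fin 3) ℂ) (fabc a b c)) =
      (v * p 0) ^ 4 + (r * p 1 + s * p 2) ^ 4 + (t * p 1 + u * p 2) ^ 4 +
      2 * a * ((v * p 0) ^ 2 * (r * p 1 + s * p 2) ^ 2) +
      2 * b * ((v * p 0) ^ 2 * (t * p 1 + u * p 2) ^ 2) +
      2 * c * ((r * p 1 + s * p 2) ^ 2 * (t * p 1 + u * p 2) ^ 2) := by
  simp [fabc, substMat, Fin.sum_univ_three]

/-- The coefficient of `x²yz` in `f_{abc} ∘ A` vanishes, as it does in every `fabc`. -/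
lemma mixed_coeff_eq_zero {v r s t u a b c a' b' c' lam : ℂ} (hv : v ≠ 0)
    (h : substMat (!![v, 0, 0; 0, r, s; 0, t, u] : Matrix (Fin 3) (Fin 3) ℂ) (fabc a b c) =
      C lam * fabc a' b' c') : a * (r * s) + b * (t * u) = 0 := by
  have key (x y z : ℂ) := congrArg (eval ![x, y, z]) h
  simp only [eval_subst_fabc, map_mul, eval_C, eval_fabc, cons_val] at key
  have h8 : 8 * v ^ 2 * (a * (r * s) + b * (t * u)) = 0 := by
    -- The part odd in `z` at `y = z = 1`; subtracting its value at `x = 0` isolates `x²yz`.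
    linear_combination key 1 1 1 - key 1 1 (-1) - key 0 1 1 + key 0 1 (-1)
  simpa [hv] using h8

/-- an invertible matrix `A = [[v,0,0],[0,r,s],[0,t,u]]` maps every quartic
`f_{abc}` with `(a,b,c) ∈ U` to a nonzero multiple of some `f_{a'b'c'}` iff either
`s = t = 0` and `r⁴ = u⁴ = v⁴`, or `r = u = 0` and `s⁴ = t⁴ = v⁴`. -/
theorem stmt14 (v r s t u : ℂ)
    (hA : IsUnit (!![v, 0, 0; 0, r, s; 0, t, u] : Matrix (Fin 3) (Fin 3) ℂ)) :
    (∀ a b c : ℂ,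
        (a ^ 2 - 1) * (b ^ 2 - 1) * (c ^ 2 - 1) *
            (a ^ 2 + b ^ 2 + c ^ 2 - 2 * a * b * c - 1) ≠ 0 →
        ∃ a' b' c' lam : ℂ, lam ≠ 0 ∧
          substMat (!![v, 0, 0; 0, r, s; 0, t, u] : Matrix (Fin 3) (Fin 3) ℂ)
              (fabc a b c) = C lam * fabc a' b' c') ↔
      ((s = 0 ∧ t = 0 ∧ r ^ 4 = u ^ 4 ∧ u ^ 4 = v ^ 4) ∨
        (r = 0 ∧ u = 0 ∧ s ^ 4 = t ^ 4 ∧ t ^ 4 = v ^ 4)) := by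
  have hdet : v * (r * u - s * t) ≠ 0 := by
    have h := ((isUnit_iff_isUnit_det _).mp hA).ne_zero
    simp only [det_fin_three, of_apply, cons_val] at h
    intro h0
    apply h
    linear_combination h0
  have hv : v ≠ 0 := left_ne_zero_of_mul hdet
  have hru : r * u - s * t ≠ 0 := right_ne_zero_of_mul hdet
  constructor
  · intro H
    have hrs : r * s = 0 := by
      obtain ⟨a', b', c', lam, -, h⟩ := H 2 0 0 (by norm_num)
      simpa using mixed_coeff_eq_zero hv h
    have htu : t * u = 0 := by
      obtain ⟨a', b', c', lam, -, h⟩ := H 0 2 0 (by norm_num)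
      simpa using mixed_coeff_eq_zero hv h
    obtain ⟨a', b', c', lam, -, h⟩ := H 0 0 0 (by norm_num)
    have key (x y z : ℂ) := congrArg (eval ![x, y, z]) h
    simp only [eval_subst_fabc, map_mul, eval_C, eval_fabc, cons_val] at key
    have hx : v ^ 4 = lam := by linear_combination key 1 0 0
    have hy : r ^ 4 + t ^ 4 = lam := by linear_combination key 0 1 0
    have hz : s ^ 4 + u ^ 4 = lam := by linear_combination key 0 0 1
    rcases mul_eq_zero.mp hrs with rfl | rfl
    · have hst : s ≠ 0 ∧ t ≠ 0 := by simpa using hru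
      obtain rfl : u = 0 := (mul_eq_zero.mp htu).resolve_left hst.2
      right
      refine ⟨rfl, rfl, ?_, ?_⟩
      · linear_combination hz - hy
      · linear_combination hy - hx
    · have hru' : r ≠ 0 ∧ u ≠ 0 := by simpa using hru
      obtain rfl : t = 0 := (mul_eq_zero.mp htu).resolve_right hru'.2
      left
      refine ⟨rfl, rfl, ?_, ?_⟩
      · linear_combination hy - hz
      · linear_combination hz - hx
  · rintro (⟨rfl, rfl, h1, h2⟩ | ⟨rfl, rfl, h1, h2⟩) a b c -
    · refine ⟨a * r ^ 2 / v ^ 2, b * u ^ 2 / v ^ 2, c * (r ^ 2 * u ^ 2) / v ^ 4, v ^ 4,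
        pow_ne_zero 4 hv, MvPolynomial.funext fun p => ?_⟩
      rw [eval_subst_fabc, map_mul, eval_C, eval_fabc]
      field_simp
      linear_combination p 1 ^ 4 * (h1 + h2) + p 2 ^ 4 * h2
    -- Here `y` and `z` are interchanged, so `a` and `b` trade places.
    · refine ⟨b * t ^ 2 / v ^ 2, a * s ^ 2 / v ^ 2, c * (s ^ 2 * t ^ 2) / v ^ 4, v ^ 4,
        pow_ne_zero 4 hv, MvPolynomial.funext fun p => ?_⟩
      rw [eval_subst_fabc, map_mul, eval_C, eval_fabc]
      field_simp
      linear_combination p 2 ^ 4 * (h1 + h2) + p 1 ^ 4 * h2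
end
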